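/- arXiv:0904.1961 — 8 statements merged into one kernel-verified Lean document; each statement's English description precedes it below -/
import Mathlib

section
/- Let g be a Lie algebra (over a field of characteristic zero, or any commutative ring) and let d : g → g be a linear map that is a derivation of the bracket (d[x,y] = [dx,y] + [x,dy]) and satisfies d ∘ d = 0. Then the derived bracket ⟦x,y⟧ := [dx, y] satisfies the left Leibniz identity: ⟦x,⟦y,z⟧⟧ = ⟦⟦x,y⟧,z⟧ + ⟦y,⟦x,z⟧⟧ for all x, y, z ∈ g. -/
section DerivedBracket

variable {L : Type*} [LieRing L] {M : Type*} [AddCommGroup M] [LieRingModule L M]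

theorem map_lie_map_of_derivation_of_sq_zero {d : L → L}
    (hder : ∀ x y : L, d ⁅x, y⁆ = ⁅d x, y⁆ + ⁅x, d y⁆) (hsq : ∀ x : L, d (d x) = 0) (x y : L) :
    d ⁅d x, y⁆ = ⁅d x, d y⁆ := by
  rw [hder, hsq, zero_lie, zero_add]

-- The hypothesis `hT` is the embedding tensor identity; for `V = L` it says that `T` is an
-- averaging operator.
theorem leibniz_lie_of_map_lie_map {V : Type*} [Bracket L V] {T : V → L}
    (hT : ∀ x y : V, T ⁅T x, y⁆ = ⁅T x, T y⁆) (x y : V) (m : M) :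
    ⁅T x, ⁅T y, m⁆⁆ = ⁅T ⁅T x, y⁆, m⁆ + ⁅T y, ⁅T x, m⁆⁆ := by
  rw [hT]
  exact leibniz_lie (T x) (T y) m

theorem derived_bracket_left_leibniz_general {d : L → L}
    (hder : ∀ x y : L, d ⁅x, y⁆ = ⁅d x, y⁆ + ⁅x, d y⁆) (hsq : ∀ x : L, d (d x) = 0)
    (x y : L) (m : M) :
    ⁅d x, ⁅d y, m⁆⁆ = ⁅d ⁅d x, y⁆, m⁆ + ⁅d y, ⁅d x, m⁆⁆ :=
  leibniz_lie_of_map_lie_map (map_lie_map_of_derivation_of_sq_zero hder hsq) x y m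

end DerivedBracket

/-- The derived bracket `⟦x,y⟧ := ⁅d x, y⁆` of a square-zero derivation `d` on a
Lie algebra satisfies the left Leibniz identity. -/
theorem derived_bracket_left_leibniz
    {R : Type*} [CommRing R] {L : Type*} [LieRing L] [LieAlgebra R L]
    (d : L →ₗ[R] L)
    (hder : ∀ x y : L, d ⁅x, y⁆ = ⁅d x, y⁆ + ⁅x, d y⁆)
    (hsq : ∀ x : L, d (d x) = 0)
    (x y z : L) :
    ⁅d x, ⁅d y, z⁆⁆ = ⁅d ⁅d x, y⁆, z⁆ + ⁅d y, ⁅d x, z⁆⁆ :=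
  derived_bracket_left_leibniz_general hder hsq x y z
end

section
/- Let g be a Lie algebra and let d : g → g be a linear map that is a derivation of the bracket and satisfies d ∘ d = 0. Then the second derived bracket ⟦x,y⟧ := [x, dy] satisfies the right Leibniz identity: ⟦⟦x,y⟧,z⟧ = ⟦⟦x,z⟧,y⟧ + ⟦x,⟦y,z⟧⟧ for all x, y, z ∈ g. -/
section LieRing

variable {L : Type*} [LieRing L]

theorem right_leibniz_lie (x y z : L) : ⁅⁅x, y⁆, z⁆ = ⁅⁅x, z⁆, y⁆ + ⁅x, ⁅y, z⁆⁆ := by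
  rw [leibniz_lie x y z, ← lie_skew y ⁅x, z⁆, add_neg_cancel_comm_assoc]

variable {d : L → L}

theorem map_lie_map_of_map_map_eq_zero (hder : ∀ x y : L, d ⁅x, y⁆ = ⁅d x, y⁆ + ⁅x, d y⁆)
    {z : L} (hz : d (d z) = 0) (y : L) : d ⁅y, d z⁆ = ⁅d y, d z⁆ := by
  rw [hder, hz, lie_zero, add_zero]

-- `havg` is the defining identity of an averaging operator.
theorem derived_bracket_right_leibniz_general (havg : ∀ y z : L, d ⁅y, d z⁆ = ⁅d y, d z⁆)
    (x y z : L) : ⁅⁅x, d y⁆, d z⁆ = ⁅⁅x, d z⁆, d y⁆ + ⁅x, d ⁅y, d z⁆⁆ := by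
  rw [havg]
  exact right_leibniz_lie x (d y) (d z)

end LieRing

/-- The second derived bracket `⟦x,y⟧ := ⁅x, d y⁆` of a square-zero derivation `d`
on a Lie algebra satisfies the right Leibniz identity. -/
theorem derived_bracket_right_leibniz
    {R : Type*} [CommRing R] {L : Type*} [LieRing L] [LieAlgebra R L]
    (d : L →ₗ[R] L)
    (hder : ∀ x y : L, d ⁅x, y⁆ = ⁅d x, y⁆ + ⁅x, d y⁆)
    (hsq : ∀ x : L, d (d x) = 0)
    (x y z : L) :
    ⁅⁅x, d y⁆, d z⁆ = ⁅⁅x, d z⁆, d y⁆ + ⁅x, d ⁅y, d z⁆⁆ :=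
  derived_bracket_right_leibniz_general
    (fun y z ↦ map_lie_map_of_map_map_eq_zero hder (hsq z) y) x y z
end

section
/- Let A be an associative algebra and let d : A → A be a linear map satisfying d(xy) = (dx)y + x(dy) for all x, y and d ∘ d = 0. Define x ⊣ y := x(dy) and x ⊢ y := (dx)y. Then (A, ⊣, ⊢) is a diassociative algebra, i.e. for all x, y, z ∈ A: (x ⊣ y) ⊣ z = x ⊣ (y ⊣ z) = x ⊣ (y ⊢ z); (x ⊢ y) ⊣ z = x ⊢ (y ⊣ z); and (x ⊣ y) ⊢ z = (x ⊢ y) ⊢ z = x ⊢ (y ⊢ z). -/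
/-- A two-sided averaging operator on a magma, not assumed to be additive. A square-zero
derivation is one, and on a semigroup this property alone makes the derived products
`x * T y` and `T x * y` diassociative. -/
structure IsAveragingOperator {A : Type*} [Mul A] (T : A → A) : Prop where
  map_mul_map : ∀ x y, T (x * T y) = T x * T y
  map_map_mul : ∀ x y, T (T x * y) = T x * T y

theorem IsAveragingOperator.of_leibniz_of_sq_zero {A : Type*} [NonUnitalNonAssocSemiring A]
    {d : A → A} (leibniz : ∀ x y, d (x * y) = d x * y + x * d y) (sq_zero : ∀ x, d (d x) = 0) :
    IsAveragingOperator d where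
  map_mul_map x y :=
    calc d (x * d y) = d x * d y + x * d (d y) := leibniz x (d y)
      _ = d x * d y := by rw [sq_zero, mul_zero, add_zero]
  map_map_mul x y :=
    calc d (d x * y) = d (d x) * y + d x * d y := leibniz (d x) y
      _ = d x * d y := by rw [sq_zero, zero_mul, zero_add]

theorem derived_products_diassociative_general {A : Type*} [Semigroup A] {T : A → A}
    (hT : IsAveragingOperator T) (x y z : A) :
    (x * T y) * T z = x * T (y * T z) ∧
    x * T (y * T z) = x * T (T y * z) ∧
    (T x * y) * T z = T x * (y * T z) ∧
    T (x * T y) * z = T (T x * y) * z ∧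
    T (T x * y) * z = T x * (T y * z) := by
  refine ⟨?_, ?_, mul_assoc _ _ _, ?_, ?_⟩
  · rw [hT.map_mul_map, mul_assoc]
  · rw [hT.map_mul_map, hT.map_map_mul]
  · rw [hT.map_mul_map, hT.map_map_mul]
  · rw [hT.map_map_mul, mul_assoc]

/-- A square-zero derivation `d` on an associative algebra yields a diassociative
algebra via the derived products `x ⊣ y := x * d y` and `x ⊢ y := d x * y`:
the five diassociativity axioms hold. -/
theorem derived_products_diassociative
    {R : Type*} [CommRing R] {A : Type*} [NonUnitalRing A] [Module R A]
    (d : A →ₗ[R] A)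
    (hder : ∀ x y : A, d (x * y) = d x * y + x * d y)
    (hsq : ∀ x : A, d (d x) = 0)
    (x y z : A) :
    (x * d y) * d z = x * d (y * d z) ∧
    x * d (y * d z) = x * d (d y * z) ∧
    (d x * y) * d z = d x * (y * d z) ∧
    d (x * d y) * z = d (d x * y) * z ∧
    d (d x * y) * z = d x * (d y * z) :=
  derived_products_diassociative_general (.of_leibniz_of_sq_zero hder hsq) x y z
end

section
/- Let A be a commutative associative algebra and let d : A → A be a linear map satisfying d(xy) = (dx)y + x(dy) for all x, y and d ∘ d = 0. Then the derived product x ∗ y := (dx)y makes A a left permutation algebra: ∗ is associative and (x ∗ y) ∗ z = (y ∗ x) ∗ z for all x, y, z ∈ A. -/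
section DerivedProduct

variable {A : Type*}

/-- The derived product `x ∗ y := d x * y`, the candidate perm product; `d` is a bare function,
not a bundled derivation. -/
def derivedMul [Mul A] (d : A → A) (x y : A) : A :=
  d x * y

/- `d` carries `∗` to the original product, so the perm identities for `∗` reduce to associativity
and commutativity of the latter. -/
theorem map_derivedMul [NonUnitalNonAssocSemiring A] {d : A → A}
    (hder : ∀ x y : A, d (x * y) = d x * y + x * d y) (hsq : ∀ x : A, d (d x) = 0) (x y : A) :
    d (derivedMul d x y) = d x * d y :=
  calc d (d x * y) = d (d x) * y + d x * d y := hder (d x) y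
    _ = d x * d y := by rw [hsq, zero_mul, zero_add]

theorem derivedMul_assoc [NonUnitalSemiring A] {d : A → A}
    (hder : ∀ x y : A, d (x * y) = d x * y + x * d y) (hsq : ∀ x : A, d (d x) = 0) (x y z : A) :
    derivedMul d (derivedMul d x y) z = derivedMul d x (derivedMul d y z) :=
  calc d (derivedMul d x y) * z = d x * d y * z := by rw [map_derivedMul hder hsq]
    _ = d x * (d y * z) := mul_assoc _ _ _

theorem derivedMul_left_perm [NonUnitalNonAssocSemiring A] {d : A → A}
    (hder : ∀ x y : A, d (x * y) = d x * y + x * d y) (hsq : ∀ x : A, d (d x) = 0)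
    {x y : A} (hxy : Commute (d x) (d y)) (z : A) :
    derivedMul d (derivedMul d x y) z = derivedMul d (derivedMul d y x) z :=
  calc d (derivedMul d x y) * z = d x * d y * z := by rw [map_derivedMul hder hsq]
    _ = d y * d x * z := by rw [hxy.eq]
    _ = d (derivedMul d y x) * z := by rw [map_derivedMul hder hsq]

theorem derived_product_perm_general [NonUnitalSemiring A] {d : A → A}
    (hder : ∀ x y : A, d (x * y) = d x * y + x * d y) (hsq : ∀ x : A, d (d x) = 0)
    (hcomm : ∀ x y : A, Commute (d x) (d y)) (x y z : A) :
    derivedMul d (derivedMul d x y) z = derivedMul d x (derivedMul d y z) ∧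
    derivedMul d (derivedMul d x y) z = derivedMul d (derivedMul d y x) z :=
  ⟨derivedMul_assoc hder hsq x y z, derivedMul_left_perm hder hsq (hcomm x y) z⟩

end DerivedProduct

/-- A square-zero derivation `d` on a commutative associative algebra yields a left
permutation algebra via the derived product `x ∗ y := d x * y`: the product is
associative and satisfies the left perm identity `(x∗y)∗z = (y∗x)∗z`. -/
theorem derived_product_perm
    {R : Type*} [CommRing R] {A : Type*} [NonUnitalCommRing A] [Module R A]
    (d : A →ₗ[R] A)
    (hder : ∀ x y : A, d (x * y) = d x * y + x * d y)
    (hsq : ∀ x : A, d (d x) = 0)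
    (x y z : A) :
    d (d x * y) * z = d x * (d y * z) ∧
    d (d x * y) * z = d (d y * x) * z :=
  derived_product_perm_general hder hsq (fun _ _ => Commute.all _ _) x y z
end

section
/- Let A be an associative algebra and let α : A → A be a linear averaging operator, i.e. α(α(x)y) = α(x)α(y) = α(xα(y)) for all x, y ∈ A. Define x ⊣ y := xα(y) and x ⊢ y := α(x)y. Then (A, ⊣, ⊢) is a diassociative algebra, i.e. for all x, y, z ∈ A: (x ⊣ y) ⊣ z = x ⊣ (y ⊣ z) = x ⊣ (y ⊢ z); (x ⊢ y) ⊣ z = x ⊢ (y ⊣ z); and (x ⊣ y) ⊢ z = (x ⊢ y) ⊢ z = x ⊢ (y ⊢ z). -/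
/-- Rota's averaging relation `α (α x * y) = α x * α y = α (x * α y)`, for a self-map of a magma. -/
structure IsAveraging {S : Type*} [Mul S] (α : S → S) : Prop where
  map_map_mul (x y : S) : α (α x * y) = α x * α y
  map_mul_map (x y : S) : α (x * α y) = α x * α y

/-- Loday's diassociativity axioms for two products on a set: `left` is `⊣` and `right` is `⊢`.
A diassociative algebra is a module with two bilinear products satisfying them. -/
structure IsDiassociative {S : Type*} (left right : S → S → S) : Prop where
  left_assoc (x y z : S) : left (left x y) z = left x (left y z)
  left_left_eq_left_right (x y z : S) : left x (left y z) = left x (right y z)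
  right_left_assoc (x y z : S) : left (right x y) z = right x (left y z)
  left_right_eq_right_right (x y z : S) : right (left x y) z = right (right x y) z
  right_assoc (x y z : S) : right (right x y) z = right x (right y z)

theorem IsAveraging.map_mul_map_eq_map_map_mul {S : Type*} [Mul S] {α : S → S}
    (hα : IsAveraging α) (x y : S) : α (x * α y) = α (α x * y) :=
  (hα.map_mul_map x y).trans (hα.map_map_mul x y).symm

theorem averaging_diassociative_general {S : Type*} [Semigroup S] {α : S → S}
    (hα : IsAveraging α) :
    IsDiassociative (fun x y ↦ x * α y) (fun x y ↦ α x * y) where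
  left_assoc x y z :=
    calc x * α y * α z = x * (α y * α z) := mul_assoc ..
      _ = x * α (y * α z) := by rw [hα.map_mul_map]
  left_left_eq_left_right x y z := congrArg (x * ·) (hα.map_mul_map_eq_map_map_mul y z)
  right_left_assoc x y z := mul_assoc (α x) y (α z)
  left_right_eq_right_right x y z := congrArg (· * z) (hα.map_mul_map_eq_map_map_mul x y)
  right_assoc x y z :=
    calc α (α x * y) * z = α x * α y * z := by rw [hα.map_map_mul]
      _ = α x * (α y * z) := mul_assoc ..

/-- An averaging operator `α` on an associative algebra yields a diassociative
algebra via `x ⊣ y := x * α y` and `x ⊢ y := α x * y`: the five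
diassociativity axioms hold. -/
theorem averaging_diassociative
    {R : Type*} [CommRing R] {A : Type*} [NonUnitalRing A] [Module R A]
    (α : A →ₗ[R] A)
    (hav₁ : ∀ x y : A, α (α x * y) = α x * α y)
    (hav₂ : ∀ x y : A, α x * α y = α (x * α y))
    (x y z : A) :
    (x * α y) * α z = x * α (y * α z) ∧
    x * α (y * α z) = x * α (α y * z) ∧
    (α x * y) * α z = α x * (y * α z) ∧
    α (x * α y) * z = α (α x * y) * z ∧
    α (α x * y) * z = α x * (α y * z) := by
  have h := averaging_diassociative_general ⟨hav₁, fun x y ↦ (hav₂ x y).symm⟩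
  exact ⟨h.left_assoc x y z, h.left_left_eq_left_right x y z, h.right_left_assoc x y z,
    h.left_right_eq_right_right x y z, h.right_assoc x y z⟩
end

section
/- Let (P, ·, {·,·}) be a Poisson algebra and let d : P → P be a linear map with d ∘ d = 0 which is a derivation of both products: d(xy) = (dx)y + x(dy) and d{x,y} = {dx,y} + {x,dy}. Define the derived bracket ⟦x,y⟧ := {dx, y} and the derived product x ∗ y := (dx)y. Then for all x, y, z ∈ P the dual-prePoisson compatibility relations hold: (pp1) ⟦x, y ∗ z⟧ = ⟦x,y⟧ ∗ z + y ∗ ⟦x,z⟧; (pp2) ⟦x ∗ y, z⟧ = x ∗ ⟦y,z⟧ + y ∗ ⟦x,z⟧; (pp3) ⟦x,y⟧ ∗ z = −⟦y,x⟧ ∗ z. -/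
/-!
Since `d ∘ d = 0`, the map `d` carries each derived operation to the operation it comes from:
`d ⟦x, y⟧ = {d x, d y}` and `d (x ∗ y) = d x * d y`. The relations (pp1), (pp2) and (pp3) are then
the Leibniz rule in the second argument, the Leibniz rule in the first argument and the
skew-symmetry of the bracket, evaluated at `d x`, `d y` and `z`.
-/

theorem map_derived_product_of_sq_eq_zero {M : Type*} [AddZeroClass M] {op : M → M → M}
    {d : M → M} (zero_op : ∀ y, op 0 y = 0)
    (hder : ∀ x y, d (op x y) = op (d x) y + op x (d y)) (hsq : ∀ x, d (d x) = 0) (x y : M) :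
    d (op (d x) y) = op (d x) (d y) := by
  rw [hder, hsq, zero_op, zero_add]

section SkewBiderivation

variable {P : Type*} [NonUnitalNonAssocCommRing P] {br : P → P → P}

theorem zero_bracket_of_leibniz (hskew : ∀ x y, -br x y = br y x)
    (hleib : ∀ x y z, br x (y * z) = br x y * z + y * br x z) (y : P) : br 0 y = 0 := by
  have bracket_zero : br y 0 = 0 := by simpa using hleib y 0 0
  rw [← hskew, bracket_zero, neg_zero]

theorem mul_bracket_of_leibniz (hskew : ∀ x y, -br x y = br y x)
    (hleib : ∀ x y z, br x (y * z) = br x y * z + y * br x z) (x y z : P) :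
    br (x * y) z = x * br y z + y * br x z :=
  calc
    br (x * y) z = -(br z x * y + x * br z y) := by rw [← hskew, hleib]
    _ = br x z * y + x * br y z := by rw [neg_add, ← neg_mul, ← mul_neg, hskew, hskew]
    _ = x * br y z + y * br x z := by rw [add_comm, mul_comm y]

theorem poisson_derived_dual_prePoisson_general
    (hskew : ∀ x y, -br x y = br y x)
    (hleib : ∀ x y z, br x (y * z) = br x y * z + y * br x z) {d : P → P}
    (hder_mul : ∀ x y, d (x * y) = d x * y + x * d y)
    (hder_br : ∀ x y, d (br x y) = br (d x) y + br x (d y))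
    (hsq : ∀ x, d (d x) = 0) (x y z : P) :
    br (d x) (d y * z) = d (br (d x) y) * z + d y * br (d x) z ∧
    br (d (d x * y)) z = d x * br (d y) z + d y * br (d x) z ∧
    d (br (d x) y) * z = -(d (br (d y) x) * z) := by
  have map_derived_bracket (a b : P) : d (br (d a) b) = br (d a) (d b) :=
    map_derived_product_of_sq_eq_zero (zero_bracket_of_leibniz hskew hleib) hder_br hsq a b
  have map_derived_mul (a b : P) : d (d a * b) = d a * d b :=
    map_derived_product_of_sq_eq_zero zero_mul hder_mul hsq a b
  refine ⟨?pp1, ?pp2, ?pp3⟩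
  case pp1 => rw [map_derived_bracket, hleib]
  case pp2 => rw [map_derived_mul, mul_bracket_of_leibniz hskew hleib]
  case pp3 => rw [map_derived_bracket, map_derived_bracket, ← neg_mul, hskew]

end SkewBiderivation

/-- Let `(P, *, br)` be a Poisson algebra (commutative associative product `*` and a
Lie bracket `br` satisfying the Leibniz rule) and `d` a square-zero derivation of
both products.  The derived bracket `⟦x,y⟧ := br (d x) y` and the derived product
`x ∗ y := d x * y` satisfy the dual-prePoisson compatibility relations
(pp1), (pp2), (pp3). -/
theorem poisson_derived_dual_prePoisson
    {R : Type*} [CommRing R] {P : Type*} [CommRing P] [Algebra R P]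
    (br : P →ₗ[R] P →ₗ[R] P)
    (halt : ∀ x : P, br x x = 0)
    (hjac : ∀ x y z : P, br x (br y z) = br (br x y) z + br y (br x z))
    (hleib : ∀ x y z : P, br x (y * z) = br x y * z + y * br x z)
    (d : P →ₗ[R] P)
    (hder_mul : ∀ x y : P, d (x * y) = d x * y + x * d y)
    (hder_br : ∀ x y : P, d (br x y) = br (d x) y + br x (d y))
    (hsq : ∀ x : P, d (d x) = 0)
    (x y z : P) :
    br (d x) (d y * z) = d (br (d x) y) * z + d y * br (d x) z ∧
    br (d (d x * y)) z = d x * br (d y) z + d y * br (d x) z ∧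
    d (br (d x) y) * z = -(d (br (d y) x) * z) :=
  poisson_derived_dual_prePoisson_general (LinearMap.IsAlt.neg halt) hleib hder_mul hder_br hsq
    x y z
end

section
/- Let (P, ·, {·,·}) be a Poisson algebra and let α : P → P be a linear averaging operator for both products: α(α(x)y) = α(x)α(y) = α(xα(y)) and α{α(x),y} = {α(x),α(y)} = α{x,α(y)} for all x, y. Define ⟦x,y⟧ := {α(x), y} and x ∗ y := α(x)y. Then for all x, y, z ∈ P: (pp1) ⟦x, y ∗ z⟧ = ⟦x,y⟧ ∗ z + y ∗ ⟦x,z⟧; (pp2) ⟦x ∗ y, z⟧ = x ∗ ⟦y,z⟧ + y ∗ ⟦x,z⟧; (pp3) ⟦x,y⟧ ∗ z = −⟦y,x⟧ ∗ z. -/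
/-!
Since `α` is averaging, `α (br (α x) y) = br (α x) (α y)` and `α (α x * y) = α x * α y`, so each
relation becomes an identity in `P` in which the Leibniz rule or skew-symmetry is applied to values
of `α`: (pp1) is the Leibniz rule in the second argument, (pp2) is the Leibniz rule in the first
argument, obtained from the second one by skew-symmetry, and (pp3) is skew-symmetry itself.
-/

/-- The left half of the averaging identity for a binary operation `m`. It says that `α` carries
Aguiar's derived operation `(x, y) ↦ m (α x) y` to `m`. No linearity is built in, so that the
product and the bracket of an algebra are treated alike. -/
def IsLeftAveraging {P : Type*} (m : P → P → P) (α : P → P) : Prop :=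
  ∀ x y : P, α (m (α x) y) = m (α x) (α y)

theorem leibniz_left_of_leibniz_right_of_skew {P : Type*} [NonUnitalNonAssocCommRing P]
    {br : P → P → P} (hskew : ∀ x y, br x y = -br y x)
    (hleib : ∀ x y z, br x (y * z) = br x y * z + y * br x z) (x y z : P) :
    br (x * y) z = x * br y z + y * br x z :=
  calc
    br (x * y) z = -(br z x * y + x * br z y) := by rw [hskew, hleib]
    _ = x * -br z y + y * -br z x := by
      rw [neg_add_rev, ← mul_neg, ← neg_mul, mul_comm (-br z x)]
    _ = x * br y z + y * br x z := by rw [← hskew, ← hskew]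

namespace IsLeftAveraging

theorem leibniz_right {P : Type*} [Mul P] [Add P] {br : P → P → P} {α : P → P}
    (hbr : IsLeftAveraging br α)
    (hleib : ∀ x y z, br x (y * z) = br x y * z + y * br x z) (x y z : P) :
    br (α x) (α y * z) = α (br (α x) y) * z + α y * br (α x) z := by
  rw [hleib, hbr]

theorem leibniz_left {P : Type*} [Mul P] [Add P] {br : P → P → P} {α : P → P}
    (hmul : IsLeftAveraging (· * ·) α)
    (hleib : ∀ x y z, br (x * y) z = x * br y z + y * br x z) (x y z : P) :
    br (α (α x * y)) z = α x * br (α y) z + α y * br (α x) z := by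
  rw [hmul x y, hleib]

theorem map_skew {P : Type*} [Neg P] {br : P → P → P} {α : P → P}
    (hbr : IsLeftAveraging br α) (hskew : ∀ x y, br x y = -br y x) (x y : P) :
    α (br (α x) y) = -α (br (α y) x) := by
  rw [hbr, hbr, hskew]

end IsLeftAveraging

theorem poisson_averaging_dual_prePoisson_general {P : Type*} [NonUnitalNonAssocCommRing P]
    {br : P → P → P} (hskew : ∀ x y, br x y = -br y x)
    (hleib : ∀ x y z, br x (y * z) = br x y * z + y * br x z)
    {α : P → P} (hmul : IsLeftAveraging (· * ·) α) (hbr : IsLeftAveraging br α) (x y z : P) :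
    br (α x) (α y * z) = α (br (α x) y) * z + α y * br (α x) z ∧
    br (α (α x * y)) z = α x * br (α y) z + α y * br (α x) z ∧
    α (br (α x) y) * z = -(α (br (α y) x) * z) := by
  refine ⟨hbr.leibniz_right hleib x y z, ?_, ?_⟩
  · exact hmul.leibniz_left (leibniz_left_of_leibniz_right_of_skew hskew hleib) x y z
  · rw [hbr.map_skew hskew, neg_mul]

/-- Let `(P, *, br)` be a Poisson algebra (commutative associative product `*` and a
Lie bracket `br` satisfying the Leibniz rule) and `α` an averaging operator for both
products.  Aguiar's derived bracket `⟦x,y⟧ := br (α x) y` and the derived product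
`x ∗ y := α x * y` satisfy the dual-prePoisson compatibility relations
(pp1), (pp2), (pp3). -/
theorem poisson_averaging_dual_prePoisson
    {R : Type*} [CommRing R] {P : Type*} [CommRing P] [Algebra R P]
    (br : P →ₗ[R] P →ₗ[R] P)
    (halt : ∀ x : P, br x x = 0)
    (hjac : ∀ x y z : P, br x (br y z) = br (br x y) z + br y (br x z))
    (hleib : ∀ x y z : P, br x (y * z) = br x y * z + y * br x z)
    (α : P →ₗ[R] P)
    (hav_mul₁ : ∀ x y : P, α (α x * y) = α x * α y)
    (hav_mul₂ : ∀ x y : P, α x * α y = α (x * α y))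
    (hav_br₁ : ∀ x y : P, α (br (α x) y) = br (α x) (α y))
    (hav_br₂ : ∀ x y : P, br (α x) (α y) = α (br x (α y)))
    (x y z : P) :
    br (α x) (α y * z) = α (br (α x) y) * z + α y * br (α x) z ∧
    br (α (α x * y)) z = α x * br (α y) z + α y * br (α x) z ∧
    α (br (α x) y) * z = -(α (br (α y) x) * z) := by
  have hskew (a b : P) : br a b = -br b a := (LinearMap.IsAlt.neg halt b a).symm
  exact poisson_averaging_dual_prePoisson_general hskew hleib hav_mul₁ hav_br₁ x y z
end

section
/- Let (P, ·, {·,·}) be a Poisson algebra and let β : P → P be a linear map that is a Rota–Baxter operator of weight zero for both products: β(x)β(y) = β(β(x)y + xβ(y)) and {β(x),β(y)} = β({β(x),y} + {x,β(y)}) for all x, y. Define x ∘ y := {β(x), y} and x · y := β(x)y (the dual-derived products). Then, in addition to ∘ being left pre-Lie and (·) being Zinbiel, the prePoisson compatibility relations hold for all x, y, z ∈ P: (x ∘ y − y ∘ x) · z = x ∘ (y · z) − y · (x ∘ z), and (x · y + y · x) ∘ z = x · (y ∘ z) + y · (x ∘ z). -/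
/-!
The Rota–Baxter identity says that `β` sends the symmetrization of `x · y := β x * y`, and the
antisymmetrization of `x ∘ y := {β x, y}`, to the product and to the bracket of the images.
So the four prePoisson relations at `x, y, z` are associativity, the Jacobi identity and the
Leibniz rule in either argument of the bracket, taken at `β x, β y, z`.
-/

section Definitions

variable {R M : Type*} [CommSemiring R]

/-- `β` is a Rota–Baxter operator of weight zero for the bilinear product `μ`. -/
def IsRotaBaxter [AddCommMonoid M] [Module R M] (μ : M →ₗ[R] M →ₗ[R] M) (β : M →ₗ[R] M) : Prop :=
  ∀ x y, μ (β x) (β y) = β (μ (β x) y + μ x (β y))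

/-- A Zinbiel product, in the convention where the left argument is the one that acts:
`x · (y · z) = (x · y + y · x) · z`. -/
def IsZinbiel [AddCommMonoid M] [Module R M] (dot : M →ₗ[R] M →ₗ[R] M) : Prop :=
  ∀ x y z, dot x (dot y z) = dot (dot x y) z + dot (dot y x) z

variable [AddCommGroup M] [Module R M]

/-- A left pre-Lie product: its associator is symmetric in the first two arguments. Mathlib's
`LeftPreLieRing` is the bundled version; a predicate is needed to put several products on `M`. -/
def IsLeftPreLie (circ : M →ₗ[R] M →ₗ[R] M) : Prop :=
  ∀ x y z, circ (circ x y) z - circ x (circ y z) = circ (circ y x) z - circ y (circ x z)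

/-- A Lie bracket on a module, as an unbundled bilinear map; the Jacobi identity is written as
the derivation property of `br x`. -/
structure IsLieBracket (br : M →ₗ[R] M →ₗ[R] M) : Prop where
  isAlt : br.IsAlt
  jacobi : ∀ x y z, br x (br y z) = br (br x y) z + br y (br x z)

/-- A Poisson algebra structure on a module, with commutative associative product `μ` (not
required to have a unit) and Lie bracket `br`. -/
structure IsPoisson (μ br : M →ₗ[R] M →ₗ[R] M) : Prop where
  comm : ∀ x y, μ x y = μ y x
  assoc : ∀ x y z, μ (μ x y) z = μ x (μ y z)
  isLieBracket : IsLieBracket br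
  leibniz : ∀ x y z, br x (μ y z) = μ (br x y) z + μ y (br x z)

/-- Aguiar's prePoisson algebras: a left pre-Lie product `circ` and a Zinbiel product `dot` with
two compatibility relations. -/
structure IsPrePoisson (circ dot : M →ₗ[R] M →ₗ[R] M) : Prop where
  isLeftPreLie : IsLeftPreLie circ
  isZinbiel : IsZinbiel dot
  dot_commutator : ∀ x y z, dot (circ x y - circ y x) z = circ x (dot y z) - dot y (circ x z)
  circ_anticommutator :
    ∀ x y z, circ (dot x y + dot y x) z = dot x (circ y z) + dot y (circ x z)

end Definitions

namespace IsRotaBaxter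

section Commutative

variable {R M : Type*} [CommSemiring R] [AddCommMonoid M] [Module R M]
  {μ : M →ₗ[R] M →ₗ[R] M} {β : M →ₗ[R] M}

theorem map_add_swap (hβ : IsRotaBaxter μ β) (hcomm : ∀ x y, μ x y = μ y x) (x y : M) :
    β (μ (β x) y + μ (β y) x) = μ (β x) (β y) := by
  rw [hβ x y, hcomm x (β y)]

theorem isZinbiel_comp (hβ : IsRotaBaxter μ β) (hcomm : ∀ x y, μ x y = μ y x)
    (hassoc : ∀ x y z, μ (μ x y) z = μ x (μ y z)) : IsZinbiel (μ ∘ₗ β) := fun x y z =>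
  calc μ (β x) (μ (β y) z)
      = μ (μ (β x) (β y)) z := (hassoc _ _ _).symm
    _ = μ (β (μ (β x) y + μ (β y) x)) z := by rw [hβ.map_add_swap hcomm]
    _ = μ (β (μ (β x) y)) z + μ (β (μ (β y) x)) z := by
      rw [map_add, map_add, LinearMap.add_apply]

end Commutative

section Alternating

variable {R M : Type*} [CommSemiring R] [AddCommGroup M] [Module R M]
  {br : M →ₗ[R] M →ₗ[R] M} {β : M →ₗ[R] M}

theorem map_sub_swap (hβ : IsRotaBaxter br β) (halt : br.IsAlt) (x y : M) :
    β (br (β x) y - br (β y) x) = br (β x) (β y) := by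
  rw [hβ x y, ← halt.neg (β y) x, sub_eq_add_neg]

theorem isLeftPreLie_comp (hβ : IsRotaBaxter br β) (hbr : IsLieBracket br) :
    IsLeftPreLie (br ∘ₗ β) := fun x y z => by
  have jacobi_map : br (β x) (br (β y) z) - br (β y) (br (β x) z)
      = br (β (br (β x) y)) z - br (β (br (β y) x)) z :=
    calc br (β x) (br (β y) z) - br (β y) (br (β x) z)
        = br (br (β x) (β y)) z := by rw [hbr.jacobi, add_sub_cancel_right]
      _ = br (β (br (β x) y - br (β y) x)) z := by rw [hβ.map_sub_swap hbr.isAlt]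
      _ = br (β (br (β x) y)) z - br (β (br (β y) x)) z := by
        rw [map_sub, map_sub, LinearMap.sub_apply]
  exact sub_eq_sub_iff_sub_eq_sub.mp jacobi_map.symm

end Alternating

end IsRotaBaxter

section PrePoisson

variable {R M : Type*} [CommSemiring R] [AddCommGroup M] [Module R M]
  {μ br : M →ₗ[R] M →ₗ[R] M} {β : M →ₗ[R] M}

theorem IsPoisson.leibniz_left (h : IsPoisson μ br) (x y z : M) :
    br (μ x y) z = μ x (br y z) + μ y (br x z) :=
  have neg_br (a b : M) : -br a b = br b a := h.isLieBracket.isAlt.neg a b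
  calc br (μ x y) z
      = -(μ (br z x) y + μ x (br z y)) := by rw [← neg_br, h.leibniz]
    _ = μ x (-br z y) + μ y (-br z x) := by
      rw [h.comm (br z x) y, map_neg, map_neg, neg_add_rev]
    _ = μ x (br y z) + μ y (br x z) := by rw [neg_br, neg_br]

theorem rota_baxter_poisson_prePoisson_general (h : IsPoisson μ br)
    (hβμ : IsRotaBaxter μ β) (hβbr : IsRotaBaxter br β) :
    IsPrePoisson (br ∘ₗ β) (μ ∘ₗ β) where
  isLeftPreLie := hβbr.isLeftPreLie_comp h.isLieBracket
  isZinbiel := hβμ.isZinbiel_comp h.comm h.assoc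
  dot_commutator x y z := by
    simp only [LinearMap.comp_apply]
    rw [hβbr.map_sub_swap h.isLieBracket.isAlt, h.leibniz, add_sub_cancel_right]
  circ_anticommutator x y z := by
    simp only [LinearMap.comp_apply]
    rw [hβμ.map_add_swap h.comm, h.leibniz_left]

end PrePoisson

/-- Let `(P, *, br)` be a Poisson algebra (commutative associative product `*` and a
Lie bracket `br` satisfying the Leibniz rule) and `β` a weight-zero Rota–Baxter
operator for both products.  The dual-derived products `x ∘ y := br (β x) y` and
`x ⊙ y := β x * y` make `P` a prePoisson algebra: `∘` is left pre-Lie, `⊙` is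
Zinbiel, and the two prePoisson compatibility relations hold. -/
theorem rota_baxter_poisson_prePoisson
    {R : Type*} [CommRing R] {P : Type*} [CommRing P] [Algebra R P]
    (br : P →ₗ[R] P →ₗ[R] P)
    (halt : ∀ x : P, br x x = 0)
    (hjac : ∀ x y z : P, br x (br y z) = br (br x y) z + br y (br x z))
    (hleib : ∀ x y z : P, br x (y * z) = br x y * z + y * br x z)
    (β : P →ₗ[R] P)
    (hrb_mul : ∀ x y : P, β x * β y = β (β x * y + x * β y))
    (hrb_br : ∀ x y : P, br (β x) (β y) = β (br (β x) y + br x (β y)))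
    (x y z : P) :
    br (β (br (β x) y)) z - br (β x) (br (β y) z)
      = br (β (br (β y) x)) z - br (β y) (br (β x) z) ∧
    β x * (β y * z) = β (β x * y) * z + β (β y * x) * z ∧
    β (br (β x) y - br (β y) x) * z
      = br (β x) (β y * z) - β y * br (β x) z ∧
    br (β (β x * y + β y * x)) z
      = β x * br (β y) z + β y * br (β x) z := by
  have h : IsPrePoisson (br ∘ₗ β) (LinearMap.mul R P ∘ₗ β) :=
    rota_baxter_poisson_prePoisson_general ⟨mul_comm, mul_assoc, ⟨halt, hjac⟩, hleib⟩ hrb_mul hrb_br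
  exact ⟨h.isLeftPreLie x y z, h.isZinbiel x y z, h.dot_commutator x y z,
    h.circ_anticommutator x y z⟩
end
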